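/- arXiv:2206.02132 — 3 statements merged into one kernel-verified Lean document; each statement's English description precedes it below -/
import Mathlib

section
/- Let E be a G-invariant, bounded, Lebesgue-measurable subset of ℝ^d. Then for any ε > 0 there exists a G-invariant compact set E_ε ⊆ E with |E \ E_ε|_κ < ε such that for every θ ∈ (0,1) there exists δ > 0 with |B(x,r) ∩ E|_κ > θ |B(x,r)|_κ for every x ∈ E_ε and every 0 < r < δ. -/
/-!
The measure `W_κ(x) dx` is locally finite, so by Besicovitch's density theorem almost every point
of `E` is a density point of `E` for it. Egorov's theorem makes the convergence of the relative mass
uniform on a subset of `E` of almost full mass, and inner regularity yields a compact `K` inside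
that subset. Egorov's theorem needs a countable family of functions, so it is applied to closed
balls of rational radius; this is enough, because every open ball is an increasing union of such
balls.

The group `G` is finite, since its elements permute the roots and fix their orthogonal complement,
and it preserves both `E` and `W_κ(x) dx`. Hence `⋃ g ∈ G, g • K` is a `G`-invariant compact subset
of `E` which contains `K` and on which the density is still uniform.
-/

open MeasureTheory Filter Metric
open scoped RealInnerProductSpace Topology

noncomputable section

/-- Euclidean space `ℝ^d`. -/
abbrev Ed (d : ℕ) : Type := EuclideanSpace ℝ (Fin d)

/-- The reflection `σ_α(x) = x - ⟨α,x⟩α` (for roots normalized by `⟨α,α⟩ = 2`). -/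
def reflAt {d : ℕ} (α x : Ed d) : Ed d := x - ⟪α, x⟫ • α

/-- The reflection group `G` generated by the reflections `σ_α`, `α ∈ R`, realized as the
submonoid of self-maps of `ℝ^d` generated by the reflections (each reflection is an
involution, so this is in fact a group of transformations). -/
def dunklGroup {d : ℕ} (R : Finset (Ed d)) : Submonoid (Function.End (Ed d)) :=
  Submonoid.closure {f : Function.End (Ed d) | ∃ α ∈ R, f = reflAt α}

/-- A (normalized) root system `R` with positive subsystem `Rp` and
`G`-invariant nonnegative multiplicity function `κ`. -/
structure IsRootSystem {d : ℕ} (R Rp : Finset (Ed d)) (κ : Ed d → ℝ) : Prop where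
  nonzero : ∀ α ∈ R, α ≠ (0 : Ed d)
  norm_two : ∀ α ∈ R, ⟪α, α⟫ = (2 : ℝ)
  refl_mem : ∀ α ∈ R, ∀ β ∈ R, reflAt α β ∈ R
  pos_sub : Rp ⊆ R
  pos_split : ∀ α ∈ R, (α ∈ Rp ∧ ¬(-α ∈ Rp)) ∨ (¬(α ∈ Rp) ∧ -α ∈ Rp)
  kappa_nonneg : ∀ α ∈ R, 0 ≤ κ α
  kappa_inv : ∀ σ ∈ dunklGroup R, ∀ α ∈ R, κ (σ α) = κ α

/-- `x ∈ ℝ^d` is regular if `⟨α,x⟩ ≠ 0` for all roots `α ∈ R`. -/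
def isRegular {d : ℕ} (R : Finset (Ed d)) (x : Ed d) : Prop :=
  ∀ α ∈ R, ⟪α, x⟫ ≠ (0 : ℝ)

/-- Second directional derivative of `u` at `p` in direction `v`. -/
def pd2 {d : ℕ} (u : Ed d × ℝ → ℝ) (p v : Ed d × ℝ) : ℝ :=
  fderiv ℝ (fun q => fderiv ℝ u q v) p v

/-- The Euclidean Laplacian on `ℝ^{d+1} = ℝ^d × ℝ`. -/
def lapE {d : ℕ} (u : Ed d × ℝ → ℝ) (p : Ed d × ℝ) : ℝ :=
  (∑ i : Fin d, pd2 u p (EuclideanSpace.single i 1, 0)) + pd2 u p (0, 1)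

/-- The Dunkl Laplacian `Δ_κ` on `ℝ^{d+1}` (the Dunkl operators act in the `x`-variables). -/
def dunklLap {d : ℕ} (Rp : Finset (Ed d)) (κ : Ed d → ℝ) (u : Ed d × ℝ → ℝ)
    (p : Ed d × ℝ) : ℝ :=
  lapE u p + 2 * ∑ α ∈ Rp, κ α *
    (fderiv ℝ u p (α, 0) / ⟪α, p.1⟫ - (u p - u (reflAt α p.1, p.2)) / ⟪α, p.1⟫ ^ 2)

/-- The open upper half-space `ℝ^{d+1}₊`. -/
def upperHS (d : ℕ) : Set (Ed d × ℝ) := {p | 0 < p.2}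

/-- `u` is `κ`-harmonic on `Ω`: `u` is `C²` on `Ω` and `Δ_κ u = 0` at every point of `Ω`
whose `x`-coordinate is regular. -/
def KHarmonicOn {d : ℕ} (R Rp : Finset (Ed d)) (κ : Ed d → ℝ) (u : Ed d × ℝ → ℝ)
    (Ω : Set (Ed d × ℝ)) : Prop :=
  ContDiffOn ℝ 2 u Ω ∧ ∀ p ∈ Ω, isRegular R p.1 → dunklLap Rp κ u p = 0

/-- The cone `Γ_a(x)` of aperture `a` with vertex `(x,0)`. -/
def cone {d : ℕ} (a : ℝ) (x : Ed d) : Set (Ed d × ℝ) :=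
  {p | 0 < p.2 ∧ dist p.1 x < a * p.2}

/-- The truncated cone `Γ_a^h(x)`. -/
def coneT {d : ℕ} (a h : ℝ) (x : Ed d) : Set (Ed d × ℝ) :=
  {p | 0 < p.2 ∧ p.2 < h ∧ dist p.1 x < a * p.2}

/-- `u` has a finite non-tangential limit at `(x,0)`. -/
def HasNTLimit {d : ℕ} (u : Ed d × ℝ → ℝ) (x : Ed d) : Prop :=
  ∀ a > (0 : ℝ), ∃ L : ℝ, Tendsto u (𝓝[cone a x] (x, (0 : ℝ))) (𝓝 L)

/-- `u` is non-tangentially bounded at `(x,0)`. -/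
def NTBounded {d : ℕ} (u : Ed d × ℝ → ℝ) (x : Ed d) : Prop :=
  ∃ a > (0 : ℝ), ∃ h > (0 : ℝ), ∃ M : ℝ, ∀ p ∈ coneT a h x, |u p| ≤ M

/-- A subset of `ℝ^d` is `G`-invariant. -/
def GInvSet {d : ℕ} (R : Finset (Ed d)) (E : Set (Ed d)) : Prop :=
  ∀ σ ∈ dunklGroup R, σ '' E = E

/-- The Dunkl weight `W_κ(x) = ∏_{α ∈ R₊} |⟨α,x⟩|^{2κ(α)}`. -/
def Wk {d : ℕ} (Rp : Finset (Ed d)) (κ : Ed d → ℝ) (x : Ed d) : ℝ :=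
  ∏ α ∈ Rp, |⟪α, x⟫| ^ (2 * κ α)

/-- The weighted measure `|A|_κ = ∫_A W_κ(x) dx`. -/
def wMeas {d : ℕ} (Rp : Finset (Ed d)) (κ : Ed d → ℝ) (A : Set (Ed d)) : ℝ :=
  ∫ x in A, Wk Rp κ x

open scoped NNReal ENNReal

lemma tendsto_ratCast_nhdsGT_zero : Tendsto (fun q : ℚ => (q : ℝ)) (𝓝[>] 0) (𝓝[>] 0) := by
  refine tendsto_nhdsWithin_of_tendsto_nhds_of_eventually_within _ ?_ ?_
  · simpa only [Rat.cast_zero] using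
      (Rat.continuous_coe_real.tendsto 0).mono_left nhdsWithin_le_nhds
  · filter_upwards [self_mem_nhdsWithin] with q hq using Set.mem_Ioi.2 (Rat.cast_pos.2 hq)

/-- Mathlib's Egorov theorem, whose index must be a countable directed order tending to `atTop`,
read along a countable dense order decreasing to `a`. -/
lemma exists_tendstoUniformlyOn_nhdsGT_of_ae_tendsto {ι α β : Type*} [LinearOrder ι]
    [TopologicalSpace ι] [OrderTopology ι] [DenselyOrdered ι] [NoMaxOrder ι] [Countable ι]
    [MeasurableSpace α] [PseudoEMetricSpace β] {μ : Measure α} {f : ι → α → β} {g : α → β}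
    {s : Set α} {a : ι} (hf : ∀ i, StronglyMeasurable (f i)) (hg : StronglyMeasurable g)
    (hs : MeasurableSet s) (hμs : μ s ≠ ∞)
    (hfg : ∀ᵐ x ∂μ, x ∈ s → Tendsto (fun i => f i x) (𝓝[>] a) (𝓝 (g x))) {ε : ℝ} (hε : 0 < ε) :
    ∃ t ⊆ s, MeasurableSet t ∧ μ t ≤ ENNReal.ofReal ε ∧
      TendstoUniformlyOn f g (𝓝[>] a) (s \ t) := by
  have : Countable (Set.Ioi a)ᵒᵈ := inferInstanceAs (Countable (Set.Ioi a))
  obtain ⟨t, hts, ht, hμt, hunif⟩ := tendstoUniformlyOn_of_ae_tendsto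
    (f := fun i : (Set.Ioi a)ᵒᵈ => f (OrderDual.ofDual i).1) (fun _ => hf _) hg hs hμs
    (hfg.mono fun x hx hxs => (tendsto_comp_coe_Ioi_atBot (a := a)).2 (hx hxs)) hε
  refine ⟨t, hts, ht, hμt, ?_⟩
  rw [← map_coe_Ioi_atBot a]
  exact hunif

section UniformDensity

variable {X : Type*} [PseudoMetricSpace X]

lemma iUnion_rat_closedBall_eq_ball (x : X) (r : ℝ) :
    ⋃ q : {q : ℚ // 0 < q ∧ (q : ℝ) < r}, closedBall x (q : ℝ) = ball x r := by
  refine Set.Subset.antisymm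
    (Set.iUnion_subset fun q => closedBall_subset_ball q.2.2) fun y hy => ?_
  obtain ⟨q, hyq, hqr⟩ := exists_rat_btwn (mem_ball.1 hy)
  exact Set.mem_iUnion.2 ⟨⟨q, Rat.cast_pos.1 (dist_nonneg.trans_lt hyq), hqr⟩, hyq.le⟩

variable [MeasurableSpace X] {μ : Measure X} {E K : Set X}

/-- The points of `K` are density points of `E` for the measure `μ`, uniformly: the relative mass
of `E` in the balls centred in `K` tends to `1` uniformly as the radius tends to `0`. The condition
is written without a quotient, and being strict it forces those balls to have positive finite
mass. -/
def HasUniformDensity (μ : Measure X) (E K : Set X) : Prop :=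
  ∀ θ : ℝ≥0, θ < 1 → ∃ δ > (0 : ℝ), ∀ x ∈ K, ∀ r : ℝ, 0 < r → r < δ →
    θ * μ (ball x r) < μ (ball x r ∩ E)

lemma HasUniformDensity.mono_left {L : Set X} (h : HasUniformDensity μ E K) (hLK : L ⊆ K) :
    HasUniformDensity μ E L := fun θ hθ =>
  let ⟨δ, hδ, hK⟩ := h θ hθ
  ⟨δ, hδ, fun x hx => hK x (hLK hx)⟩

lemma HasUniformDensity.mono_right {F : Set X} (h : HasUniformDensity μ E K) (hEF : E ⊆ F) :
    HasUniformDensity μ F K := fun θ hθ =>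
  let ⟨δ, hδ, hK⟩ := h θ hθ
  ⟨δ, hδ, fun x hx r hr hrδ =>
    (hK x hx r hr hrδ).trans_le (measure_mono (Set.inter_subset_inter_right _ hEF))⟩

lemma mul_measure_ball_le_of_rat_closedBall {θ : ℝ≥0∞} {x : X} {r : ℝ}
    (h : ∀ q : ℚ, 0 < q → (q : ℝ) < r →
      θ * μ (closedBall x q) ≤ μ (E ∩ closedBall x q)) :
    θ * μ (ball x r) ≤ μ (ball x r ∩ E) := by
  have hmono : Monotone fun q : {q : ℚ // 0 < q ∧ (q : ℝ) < r} => closedBall x (q : ℝ) :=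
    fun _ _ hpq => closedBall_subset_closedBall (Rat.cast_le.2 hpq)
  rw [← iUnion_rat_closedBall_eq_ball, hmono.directed_le.measure_iUnion, ENNReal.mul_iSup]
  refine iSup_le fun q => (h q q.2.1 q.2.2).trans (measure_mono fun y hy => ?_)
  exact ⟨Set.mem_iUnion.2 ⟨q, hy.2⟩, hy.1⟩

/-- The mass of `ball x r` is finite as soon as `θ * μ (ball x r) ≤ μ E` for some `θ ≠ 0`, so a
strictly larger ratio leaves room for the strict inequality. -/
lemma mul_measure_ball_lt_of_rat_closedBall (hEfin : μ E ≠ ∞) {θ η : ℝ≥0} (hθη : θ < η) {x : X}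
    {r : ℝ} (hr : 0 < r) (h : ∀ q : ℚ, 0 < q → (q : ℝ) < r →
      η < μ (E ∩ closedBall x q) / μ (closedBall x q)) :
    θ * μ (ball x r) < μ (ball x r ∩ E) := by
  have hle : η * μ (ball x r) ≤ μ (ball x r ∩ E) :=
    mul_measure_ball_le_of_rat_closedBall fun q hq hqr =>
      ENNReal.mul_le_of_le_div (h q hq hqr).le
  obtain ⟨q, hq, hqr⟩ := exists_rat_btwn hr
  have hpos : μ (ball x r) ≠ 0 := fun h0 => by
    have hE0 : μ (E ∩ closedBall x q) = 0 :=
      measure_mono_null (Set.inter_subset_right.trans (closedBall_subset_ball hqr)) h0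
    exact not_lt_zero ((h q (Rat.cast_pos.1 hq) hqr).trans_eq (by rw [hE0, ENNReal.zero_div]))
  have hη : (η : ℝ≥0∞) ≠ 0 := ENNReal.coe_ne_zero.2 (pos_of_gt hθη).ne'
  have hfin : μ (ball x r) ≠ ∞ := fun htop => by
    rw [htop, ENNReal.mul_top hη, top_le_iff] at hle
    exact hEfin (measure_mono_top Set.inter_subset_right hle)
  exact (ENNReal.mul_lt_mul_left hpos hfin (ENNReal.coe_lt_coe.2 hθη)).trans_le hle

lemma measurable_measure_inter_closedBall [OpensMeasurableSpace X] [SecondCountableTopology X]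
    [SFinite μ] (hE : MeasurableSet E) (r : ℝ) :
    Measurable fun x => μ (E ∩ closedBall x r) :=
  measurable_measure_prodMk_left (s := {p : X × X | p.2 ∈ E ∧ dist p.2 p.1 ≤ r})
    ((measurable_snd hE).inter (measurableSet_le (measurable_snd.dist measurable_fst)
      measurable_const))

/-- The relative mass of `E` in `closedBall x r`, set to `0` when that ball has mass `0` or `∞`. -/
def densityRatio (μ : Measure X) (E : Set X) (r : ℝ) (x : X) : ℝ :=
  (μ (E ∩ closedBall x r) / μ (closedBall x r)).toReal

lemma measurable_densityRatio [OpensMeasurableSpace X] [SecondCountableTopology X] [SFinite μ]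
    (hE : MeasurableSet E) (r : ℝ) : Measurable (densityRatio μ E r) := by
  have hball : Measurable fun x => μ (closedBall x r) := by
    simpa only [Set.univ_inter] using measurable_measure_inter_closedBall MeasurableSet.univ r
  exact ((measurable_measure_inter_closedBall hE r).div hball).ennreal_toReal

lemma hasUniformDensity_of_tendstoUniformlyOn (hEfin : μ E ≠ ∞)
    (h : TendstoUniformlyOn (fun q : ℚ => densityRatio μ E q) 1 (𝓝[>] 0) K) :
    HasUniformDensity μ E K := by
  intro θ hθ
  obtain ⟨η, hθη, hη⟩ := exists_between hθ
  have hclose : ∀ᶠ q : ℚ in 𝓝[>] 0, ∀ x ∈ K, dist 1 (densityRatio μ E q x) < 1 - η :=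
    Metric.tendstoUniformlyOn_iff.1 h (1 - η) (sub_pos.2 (NNReal.coe_lt_one.2 hη))
  obtain ⟨q₀, hq₀, hclose⟩ := mem_nhdsGT_iff_exists_Ioo_subset.1 hclose
  refine ⟨q₀, Rat.cast_pos.2 hq₀, fun x hx r hr hrδ =>
    mul_measure_ball_lt_of_rat_closedBall hEfin hθη hr fun q hq hqr => ?_⟩
  have hdist := hclose ⟨hq, Rat.cast_lt.1 (hqr.trans hrδ)⟩ x hx
  have hratio : (η : ℝ) < densityRatio μ E q x := by
    linarith [Real.sub_le_dist 1 (densityRatio μ E q x)]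
  exact (ENNReal.coe_lt_ofReal.2 hratio).trans_le ENNReal.ofReal_toReal_le

end UniformDensity

section Besicovitch

variable {X : Type*} [MetricSpace X] [SecondCountableTopology X] [HasBesicovitchCovering X]
  [MeasurableSpace X] [BorelSpace X] {μ : Measure X} [IsLocallyFiniteMeasure μ] {E : Set X}

lemma ae_tendsto_densityRatio (hE : MeasurableSet E) :
    ∀ᵐ x ∂μ, x ∈ E → Tendsto (fun r => densityRatio μ E r x) (𝓝[>] 0) (𝓝 1) := by
  filter_upwards [Besicovitch.ae_tendsto_measure_inter_div_of_measurableSet μ hE] with x hx hxE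
  rw [Set.indicator_of_mem hxE, Pi.one_apply] at hx
  exact (ENNReal.tendsto_toReal ENNReal.one_ne_top).comp hx

lemma exists_measurableSet_hasUniformDensity (hE : MeasurableSet E) (hEfin : μ E ≠ ∞) {ε : ℝ}
    (hε : 0 < ε) :
    ∃ A ⊆ E, MeasurableSet A ∧ μ (E \ A) ≤ ENNReal.ofReal ε ∧ HasUniformDensity μ E A := by
  have hlim : ∀ᵐ x ∂μ, x ∈ E → Tendsto (fun q : ℚ => densityRatio μ E q x) (𝓝[>] 0) (𝓝 1) := by
    filter_upwards [ae_tendsto_densityRatio hE] with x hx hxE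
    exact (hx hxE).comp tendsto_ratCast_nhdsGT_zero
  obtain ⟨t, htE, ht, hμt, hunif⟩ := exists_tendstoUniformlyOn_nhdsGT_of_ae_tendsto
    (fun q : ℚ => (measurable_densityRatio hE q).stronglyMeasurable) stronglyMeasurable_one
    hE hEfin hlim hε
  refine ⟨E \ t, Set.sdiff_subset, hE.diff ht, ?_,
    hasUniformDensity_of_tendstoUniformlyOn hEfin hunif⟩
  rwa [Set.sdiff_sdiff_cancel_left htE]

lemma exists_isCompact_hasUniformDensity [μ.InnerRegularCompactLTTop]
    (hE : NullMeasurableSet E μ) (hEfin : μ E ≠ ∞) {ε : ℝ} (hε : 0 < ε) :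
    ∃ K ⊆ E, IsCompact K ∧ μ (E \ K) < ENNReal.ofReal ε ∧ HasUniformDensity μ E K := by
  obtain ⟨F, hFE, hF, hF_ae⟩ := hE.exists_measurable_subset_ae_eq
  have hFfin : μ F ≠ ∞ := measure_ne_top_of_subset hFE hEfin
  obtain ⟨A, hAF, hA, hFA, hdens⟩ :=
    exists_measurableSet_hasUniformDensity hF hFfin (half_pos hε)
  obtain ⟨K, hKA, hK, hAK⟩ := hA.exists_isCompact_sdiff_lt
    (measure_ne_top_of_subset hAF hFfin) (ENNReal.ofReal_pos.2 (half_pos hε)).ne'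
  refine ⟨K, hKA.trans (hAF.trans hFE), hK, ?_, (hdens.mono_left hKA).mono_right hFE⟩
  calc μ (E \ K) = μ (F \ K) := measure_congr (hF_ae.symm.diff (ae_eq_refl K))
    _ ≤ μ (F \ A) + μ (A \ K) :=
        (measure_mono (sdiff_triangle F A K)).trans (measure_union_le _ _)
    _ < ENNReal.ofReal (ε / 2) + ENNReal.ofReal (ε / 2) :=
        ENNReal.add_lt_add_of_le_of_lt (ne_top_of_le_ne_top ENNReal.ofReal_ne_top hFA) hFA hAK
    _ = ENNReal.ofReal ε := by
        rw [← ENNReal.ofReal_add (half_pos hε).le (half_pos hε).le, add_halves]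

end Besicovitch

section GroupAction

open scoped Pointwise

lemma HasUniformDensity.iUnion_smul {X G : Type*} [PseudoMetricSpace X] [MeasurableSpace X]
    [Group G] [MulAction G X] [IsIsometricSMul G X] {μ : Measure X} [SMulInvariantMeasure G X μ]
    {E K : Set X} (hK : HasUniformDensity μ E K) (hE : ∀ g : G, g • E = E) :
    HasUniformDensity μ E (⋃ g : G, g • K) := by
  intro θ hθ
  obtain ⟨δ, hδ, hKδ⟩ := hK θ hθ
  refine ⟨δ, hδ, fun y hy r hr hrδ => ?_⟩
  obtain ⟨g, x, hx, rfl⟩ := Set.mem_iUnion.1 hy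
  have hball : g • ball x r = ball (g • x) r := smul_ball g x r
  have hinter : g • (ball x r ∩ E) = ball (g • x) r ∩ E := by rw [Set.smul_set_inter, hball, hE]
  calc θ * μ (ball (g • x) r) = θ * μ (ball x r) := by rw [← hball, measure_smul]
    _ < μ (ball x r ∩ E) := hKδ x hx r hr hrδ
    _ = μ (ball (g • x) r ∩ E) := by rw [← hinter, measure_smul]

theorem exists_isCompact_invariant_hasUniformDensity {X G : Type*} [MetricSpace X]
    [SecondCountableTopology X] [HasBesicovitchCovering X] [MeasurableSpace X] [BorelSpace X]
    [Group G] [Finite G] [MulAction G X] [IsIsometricSMul G X] {μ : Measure X}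
    [IsLocallyFiniteMeasure μ] [μ.InnerRegularCompactLTTop] [SMulInvariantMeasure G X μ]
    {E : Set X} (hE : NullMeasurableSet E μ) (hEfin : μ E ≠ ∞) (hEinv : ∀ g : G, g • E = E) {ε : ℝ}
    (hε : 0 < ε) :
    ∃ K ⊆ E, IsCompact K ∧ (∀ g : G, g • K = K) ∧ μ (E \ K) < ENNReal.ofReal ε ∧
      HasUniformDensity μ E K := by
  obtain ⟨K, hKE, hK, hεK, hdens⟩ := exists_isCompact_hasUniformDensity hE hEfin hε
  have hK_subset : K ⊆ ⋃ g : G, g • K := by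
    simpa only [one_smul] using Set.subset_iUnion (fun g : G => g • K) 1
  refine ⟨⋃ g : G, g • K, Set.iUnion_subset fun g => ?_, isCompact_iUnion fun g => hK.smul g,
    fun h => ?_, (measure_mono (Set.sdiff_subset_sdiff_right hK_subset)).trans_lt hεK,
    hdens.iUnion_smul hEinv⟩
  · exact (Set.smul_set_mono hKE).trans (hEinv g).subset
  · simp only [Set.smul_set_iUnion, smul_smul]
    exact (Equiv.mulLeft h).surjective.iUnion_comp fun g => g • K

end GroupAction

section ReflectionGroup

open scoped Pointwise

variable {V : Type*} [NormedAddCommGroup V] [InnerProductSpace ℝ V]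

/-- The tautological action of the linear isometry group. -/
instance linearIsometryEquivApplyMulAction : MulAction (V ≃ₗᵢ[ℝ] V) V where
  smul L x := L x
  one_smul _ := rfl
  mul_smul _ _ _ := rfl

instance isIsometricSMul_subgroup_linearIsometryEquiv (G : Subgroup (V ≃ₗᵢ[ℝ] V)) :
    IsIsometricSMul G V := ⟨fun L => L.1.isometry⟩

/-- The subgroup of the orthogonal group generated by the reflections in the hyperplanes `αᗮ`,
`α ∈ R`. -/
def reflectionGroup (R : Set V) : Subgroup (V ≃ₗᵢ[ℝ] V) :=
  Subgroup.closure ((fun α => (ℝ ∙ α)ᗮ.reflection) '' R)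

lemma reflectionGroup_le_stabilizer {R : Set V} (hR : R.Finite)
    (hmaps : ∀ α ∈ R, Set.MapsTo (ℝ ∙ α)ᗮ.reflection R R) :
    reflectionGroup R ≤ MulAction.stabilizer (V ≃ₗᵢ[ℝ] V) R := by
  refine (Subgroup.closure_le _).2 (Set.image_subset_iff.2 fun α hα => ?_)
  exact (MulAction.mem_stabilizer_set_iff_smul_set_subset hR).2 (hmaps α hα).image_subset

lemma reflectionGroup_le_fixingSubgroup (R : Set V) :
    reflectionGroup R ≤ fixingSubgroup (V ≃ₗᵢ[ℝ] V) ((Submodule.span ℝ R)ᗮ : Set V) := by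
  refine (Subgroup.closure_le _).2 (Set.image_subset_iff.2 fun α hα => ?_)
  refine (mem_fixingSubgroup_iff _).2 fun x hx => ?_
  have hle : ℝ ∙ α ≤ Submodule.span ℝ R :=
    Submodule.span_mono (Set.singleton_subset_iff.2 hα)
  exact Submodule.reflection_mem_subspace_eq_self (Submodule.orthogonal_le hle hx)

/-- An element of the group permutes `R` and fixes the orthogonal complement of `R`, so it is
determined by the permutation. -/
theorem finite_reflectionGroup {R : Set V} (hR : R.Finite)
    (hmaps : ∀ α ∈ R, Set.MapsTo (ℝ ∙ α)ᗮ.reflection R R) : Finite (reflectionGroup R) := by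
  have := hR.to_subtype
  have := FiniteDimensional.span_of_finite ℝ hR
  have hperm : ∀ L : reflectionGroup R, Set.MapsTo L.1 R R := fun L =>
    Set.image_subset_iff.1 (reflectionGroup_le_stabilizer hR hmaps L.2).subset
  have hspan : Submodule.span ℝ (R ∪ ((Submodule.span ℝ R)ᗮ : Set V)) = ⊤ := by
    rw [Submodule.span_union, Submodule.span_eq,
      Submodule.sup_orthogonal_of_hasOrthogonalProjection]
  refine Finite.of_injective (fun L => (hperm L).restrict) fun L M hLM => ?_
  have hR_eq : Set.EqOn L.1 M.1 R := fun α hα => congrArg Subtype.val (congrFun hLM ⟨α, hα⟩)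
  have hfix : ∀ N : reflectionGroup R, ∀ x ∈ (Submodule.span ℝ R)ᗮ, N.1 x = x := fun N =>
    (mem_fixingSubgroup_iff _).1 (reflectionGroup_le_fixingSubgroup R N.2)
  have hperp_eq : Set.EqOn L.1 M.1 (Submodule.span ℝ R)ᗮ := fun x hx =>
    (hfix L x hx).trans (hfix M x hx).symm
  exact Subtype.ext (LinearIsometryEquiv.toLinearEquiv_injective
    (LinearEquiv.toLinearMap_injective (LinearMap.ext_on hspan (hR_eq.union hperp_eq))))

end ReflectionGroup

section DunklWeight

open scoped Pointwise

variable {d : ℕ} {R Rp : Finset (Ed d)} {κ : Ed d → ℝ}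

lemma reflAt_eq_reflection {α : Ed d} (hα : ⟪α, α⟫ = (2 : ℝ)) :
    reflAt α = (ℝ ∙ α)ᗮ.reflection := by
  funext x
  have hnorm : ‖α‖ ^ 2 = 2 := by rw [← real_inner_self_eq_norm_sq, hα]
  rw [Submodule.reflection_orthogonal_apply, Submodule.reflection_singleton_apply]
  simp only [reflAt, RCLike.ofReal_real_eq_id, id_eq, hnorm]
  module

lemma inner_reflAt_comm (α x y : Ed d) : ⟪reflAt α x, y⟫ = ⟪x, reflAt α y⟫ := by
  simp only [reflAt, inner_sub_left, inner_sub_right, real_inner_smul_left, inner_smul_right,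
    real_inner_comm α x]
  ring

lemma reflAt_self {α : Ed d} (hα : ⟪α, α⟫ = (2 : ℝ)) : reflAt α α = -α := by
  rw [reflAt, hα]
  module

lemma reflAt_involutive {α : Ed d} (hα : ⟪α, α⟫ = (2 : ℝ)) : Function.Involutive (reflAt α) := by
  rw [reflAt_eq_reflection hα]
  exact Submodule.reflection_involutive _

namespace IsRootSystem

lemma kappa_reflAt (h : IsRootSystem R Rp κ) {α β : Ed d} (hα : α ∈ R) (hβ : β ∈ R) :
    κ (reflAt α β) = κ β :=
  h.kappa_inv _ (Submonoid.subset_closure ⟨α, hα, rfl⟩) β hβ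

lemma neg_mem (h : IsRootSystem R Rp κ) {α : Ed d} (hα : α ∈ R) : -α ∈ R :=
  reflAt_self (h.norm_two α hα) ▸ h.refl_mem α hα α hα

lemma kappa_neg (h : IsRootSystem R Rp κ) {α : Ed d} (hα : α ∈ R) : κ (-α) = κ α :=
  reflAt_self (h.norm_two α hα) ▸ h.kappa_reflAt hα hα

lemma mapsTo_reflection (h : IsRootSystem R Rp κ) {α : Ed d} (hα : α ∈ R) :
    Set.MapsTo (ℝ ∙ α)ᗮ.reflection (R : Set (Ed d)) R := by
  rw [← reflAt_eq_reflection (h.norm_two α hα)]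
  exact h.refl_mem α hα

lemma finite_reflectionGroup (h : IsRootSystem R Rp κ) :
    Finite (reflectionGroup (R : Set (Ed d))) :=
  _root_.finite_reflectionGroup R.finite_toSet fun _ hα => h.mapsTo_reflection hα

lemma gInvSet_iff (h : IsRootSystem R Rp κ) {E : Set (Ed d)} :
    GInvSet R E ↔ ∀ L : reflectionGroup (R : Set (Ed d)), L • E = E := by
  constructor
  · intro hE L
    suffices hle : reflectionGroup (R : Set (Ed d)) ≤ MulAction.stabilizer (Ed d ≃ₗᵢ[ℝ] Ed d) E from
      hle L.2
    refine (Subgroup.closure_le _).2 (Set.image_subset_iff.2 fun α hα => ?_)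
    have himage := hE (reflAt α) (Submonoid.subset_closure ⟨α, hα, rfl⟩)
    rwa [reflAt_eq_reflection (h.norm_two α hα)] at himage
  · intro hE σ hσ
    induction hσ using Submonoid.closure_induction with
    | mem σ hσ =>
      obtain ⟨α, hα, rfl⟩ := hσ
      rw [reflAt_eq_reflection (h.norm_two α hα)]
      exact hE ⟨_, Subgroup.subset_closure (Set.mem_image_of_mem _ hα)⟩
    | one => exact Set.image_id E
    | mul σ τ _ _ hσ hτ => exact (Set.image_comp σ τ E).trans (by rw [hτ, hσ])

lemma Wk_eq_prod_roots (h : IsRootSystem R Rp κ) (x : Ed d) :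
    Wk Rp κ x = ∏ α ∈ R, |⟪α, x⟫| ^ κ α := by
  have hneg : ∏ α ∈ R \ Rp, |⟪α, x⟫| ^ κ α = ∏ α ∈ Rp, |⟪α, x⟫| ^ κ α := by
    refine Finset.prod_nbij' Neg.neg Neg.neg (fun α hα => ?_) (fun α hα => ?_)
      (fun α _ => neg_neg α) (fun α _ => neg_neg α) (fun α hα => ?_)
    · obtain ⟨hαR, hαp⟩ := Finset.mem_sdiff.1 hα
      exact ((h.pos_split α hαR).resolve_left fun hα' => hαp hα'.1).2
    · have hαR := h.pos_sub hα
      exact Finset.mem_sdiff.2 ⟨h.neg_mem hαR,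
        ((h.pos_split α hαR).resolve_right fun hα' => hα'.1 hα).2⟩
    · rw [inner_neg_left, abs_neg, h.kappa_neg (Finset.mem_sdiff.1 hα).1]
  rw [← Finset.prod_sdiff h.pos_sub, hneg, ← Finset.prod_mul_distrib, Wk]
  refine Finset.prod_congr rfl fun α hα => ?_
  have hκ := h.kappa_nonneg α (h.pos_sub hα)
  rw [two_mul, Real.rpow_add_of_nonneg (abs_nonneg _) hκ hκ]

lemma Wk_reflAt (h : IsRootSystem R Rp κ) {β : Ed d} (hβ : β ∈ R) (x : Ed d) :
    Wk Rp κ (reflAt β x) = Wk Rp κ x := by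
  have hinvol := reflAt_involutive (h.norm_two β hβ)
  rw [h.Wk_eq_prod_roots, h.Wk_eq_prod_roots]
  refine Finset.prod_nbij' (reflAt β) (reflAt β) (h.refl_mem β hβ) (h.refl_mem β hβ)
    (fun α _ => hinvol α) (fun α _ => hinvol α) fun α hα => ?_
  rw [inner_reflAt_comm, h.kappa_reflAt hβ hα]

lemma Wk_reflectionGroup_apply (h : IsRootSystem R Rp κ) {L : Ed d ≃ₗᵢ[ℝ] Ed d}
    (hL : L ∈ reflectionGroup (R : Set (Ed d))) (x : Ed d) : Wk Rp κ (L x) = Wk Rp κ x := by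
  induction hL using Subgroup.closure_induction generalizing x with
  | mem L hL =>
    obtain ⟨α, hα, rfl⟩ := hL
    rw [← reflAt_eq_reflection (h.norm_two α hα)]
    exact h.Wk_reflAt hα x
  | one => rfl
  | mul L M _ _ hL hM => exact (hL (M x)).trans (hM x)
  | inv L _ hL => exact (hL (L.symm x)).symm.trans (congrArg (Wk Rp κ) (L.apply_symm_apply x))

end IsRootSystem

lemma Wk_nonneg (Rp : Finset (Ed d)) (κ : Ed d → ℝ) (x : Ed d) : 0 ≤ Wk Rp κ x :=
  Finset.prod_nonneg fun _ _ => Real.rpow_nonneg (abs_nonneg _) _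

lemma IsRootSystem.continuous_Wk (h : IsRootSystem R Rp κ) : Continuous (Wk Rp κ) := by
  refine continuous_finsetProd _ fun α hα => ?_
  have hκ : 0 ≤ 2 * κ α := mul_nonneg zero_le_two (h.kappa_nonneg α (h.pos_sub hα))
  exact (continuous_const.inner continuous_id).abs.rpow_const fun _ => Or.inr hκ

/-- The measure `W_κ(x) dx`, whose real-valued counterpart is `wMeas`. -/
def dunklMeasure (Rp : Finset (Ed d)) (κ : Ed d → ℝ) : Measure (Ed d) :=
  volume.withDensity fun x => ENNReal.ofReal (Wk Rp κ x)

lemma dunklMeasure_apply (Rp : Finset (Ed d)) (κ : Ed d → ℝ) (A : Set (Ed d)) :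
    dunklMeasure Rp κ A = ∫⁻ x in A, ENNReal.ofReal (Wk Rp κ x) :=
  withDensity_apply' _ A

lemma dunklMeasure_ne_top {A : Set (Ed d)} (hA : IntegrableOn (Wk Rp κ) A) :
    dunklMeasure Rp κ A ≠ ∞ := by
  rw [dunklMeasure_apply]
  exact hA.lintegral_lt_top.ne

namespace IsRootSystem

lemma wMeas_eq_toReal_dunklMeasure (h : IsRootSystem R Rp κ) (A : Set (Ed d)) :
    wMeas Rp κ A = (dunklMeasure Rp κ A).toReal := by
  rw [dunklMeasure_apply]
  exact integral_eq_lintegral_of_nonneg_ae (ae_of_all _ (Wk_nonneg Rp κ))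
    h.continuous_Wk.aestronglyMeasurable

lemma isLocallyFiniteMeasure_dunklMeasure (h : IsRootSystem R Rp κ) :
    IsLocallyFiniteMeasure (dunklMeasure Rp κ) :=
  IsLocallyFiniteMeasure.withDensity_ofReal h.continuous_Wk

lemma smulInvariantMeasure_dunklMeasure (h : IsRootSystem R Rp κ) :
    SMulInvariantMeasure (reflectionGroup (R : Set (Ed d))) (Ed d) (dunklMeasure Rp κ) where
  measure_preimage_smul L s _ := by
    change dunklMeasure Rp κ (L.1 ⁻¹' s) = _
    calc dunklMeasure Rp κ (L.1 ⁻¹' s)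
        = ∫⁻ x in L.1 ⁻¹' s, ENNReal.ofReal (Wk Rp κ (L.1 x)) := by
          simp only [dunklMeasure_apply, h.Wk_reflectionGroup_apply L.2]
      _ = ∫⁻ x in s, ENNReal.ofReal (Wk Rp κ x) :=
          L.1.measurePreserving.setLIntegral_comp_preimage_emb
            L.1.toMeasurableEquiv.measurableEmbedding
            (fun x => ENNReal.ofReal (Wk Rp κ x)) s
      _ = dunklMeasure Rp κ s := (dunklMeasure_apply Rp κ s).symm

end IsRootSystem

end DunklWeight

theorem dunkl_density_points_general {d : ℕ} {R Rp : Finset (Ed d)} {κ : Ed d → ℝ}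
    (hRS : IsRootSystem R Rp κ) {E : Set (Ed d)} (hEm : NullMeasurableSet E)
    (hEint : IntegrableOn (Wk Rp κ) E) (hEinv : GInvSet R E) :
    ∀ ε > (0 : ℝ), ∃ Eε : Set (Ed d),
      IsCompact Eε ∧ Eε ⊆ E ∧ GInvSet R Eε ∧
      wMeas Rp κ (E \ Eε) < ε ∧
      ∀ θ ∈ Set.Ioo (0 : ℝ) 1, ∃ δ > (0 : ℝ), ∀ x ∈ Eε, ∀ r : ℝ, 0 < r → r < δ →
        θ * wMeas Rp κ (ball x r) < wMeas Rp κ (ball x r ∩ E) := by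
  intro ε hε
  have := hRS.finite_reflectionGroup
  have := hRS.isLocallyFiniteMeasure_dunklMeasure
  have := hRS.smulInvariantMeasure_dunklMeasure
  have hEfin := dunklMeasure_ne_top hEint
  obtain ⟨K, hKE, hK, hKinv, hεK, hdens⟩ := exists_isCompact_invariant_hasUniformDensity
    (μ := dunklMeasure Rp κ) (hEm.mono_ac (withDensity_absolutelyContinuous _ _)) hEfin
    (hRS.gInvSet_iff.1 hEinv) hε
  simp only [hRS.wMeas_eq_toReal_dunklMeasure]
  refine ⟨K, hK, hKE, hRS.gInvSet_iff.2 hKinv, ENNReal.toReal_lt_of_lt_ofReal hεK,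
    fun θ hθ => ?_⟩
  obtain ⟨δ, hδ, hKδ⟩ := hdens ⟨θ, hθ.1.le⟩ hθ.2
  refine ⟨δ, hδ, fun x hx r hr hrδ => ?_⟩
  have hlt := ENNReal.toReal_strict_mono
    (measure_ne_top_of_subset Set.inter_subset_right hEfin) (hKδ x hx r hr hrδ)
  rwa [ENNReal.toReal_mul] at hlt

/-- **Lemma 6.1 (weighted density points).** For a `G`-invariant bounded measurable
`E ⊆ ℝ^d` and any `ε > 0` there is a `G`-invariant compact `E_ε ⊆ E` with
`|E \ E_ε|_κ < ε` such that for every `θ ∈ (0,1)` there is `δ > 0` with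
`|B(x,r) ∩ E|_κ > θ|B(x,r)|_κ` for all `x ∈ E_ε` and `0 < r < δ`. -/
theorem dunkl_density_points
    {d : ℕ} (hd : 1 ≤ d) (R Rp : Finset (Ed d)) (κ : Ed d → ℝ)
    (hRS : IsRootSystem R Rp κ)
    (E : Set (Ed d)) (hEm : MeasurableSet E) (hEb : Bornology.IsBounded E)
    (hEinv : GInvSet R E) :
    ∀ ε > (0 : ℝ), ∃ Eε : Set (Ed d),
      IsCompact Eε ∧ Eε ⊆ E ∧ GInvSet R Eε ∧
      wMeas Rp κ (E \ Eε) < ε ∧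
      ∀ θ ∈ Set.Ioo (0 : ℝ) 1, ∃ δ > (0 : ℝ), ∀ x ∈ Eε, ∀ r : ℝ, 0 < r → r < δ →
        θ * wMeas Rp κ (ball x r) < wMeas Rp κ (ball x r ∩ E) :=
  dunkl_density_points_general hRS hEm.nullMeasurableSet
    ((hRS.continuous_Wk.continuousOn.integrableOn_compact hEb.isCompact_closure).mono_set
      subset_closure) hEinv

end
end

section
/- Let λ > 0. For every x, t ∈ ℝ and every continuous function f : ℝ → ℝ with f ≥ 0, one has (τ_x^{λ+1} f)(t) + (τ_{−x}^{λ+1} f)(t) ≥ 0; that is, the operator τ_x^{λ+1} + τ_{−x}^{λ+1} is positivity-preserving. -/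
/-!
Write `B` for `B(θ)`. The substitution `θ ↦ -θ` in the integral for `τ_{-x}` leaves `B` as it is in
the integral for `τ_x` and replaces the factor `1 + θ` by `1 - θ`. Since
`(x + t)(1 + θ) + (t - x)(1 - θ) = 2(t + xθ)`, the two integrands add up to
`2 (f_e(B) + f_o(B) (t + xθ)/B) (1 - θ²)^(μ-1)`.
As `B² - (t + xθ)² = x²(1 - θ²) ≥ 0`, the quotient `(t + xθ)/B` lies in `[-1, 1]`, so the bracket is
a convex combination of `f(B)` and `f(-B)`.

The integrals may be added because the singularity of `1/B` is absorbed by the factor `1 + θ`: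
`2B² = (x + t)²(1 + θ) + (x - t)²(1 - θ)` gives `|(x + t)(1 + θ)| ≤ 2B`.
-/

open MeasureTheory intervalIntegral

noncomputable section

/-- Even part of `f`. -/
def evenPart (f : ℝ → ℝ) (s : ℝ) : ℝ := (f s + f (-s)) / 2

/-- Odd part of `f`. -/
def oddPart (f : ℝ → ℝ) (s : ℝ) : ℝ := (f s - f (-s)) / 2

/-- `B(θ) = √(x² + t² + 2xtθ)`. -/
def Bq (x t θ : ℝ) : ℝ := Real.sqrt (x ^ 2 + t ^ 2 + 2 * x * t * θ)

/-- Normalizing constant `c_μ = Γ(μ+1/2)/(Γ(μ)Γ(1/2))`. -/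
def cMu (μ : ℝ) : ℝ := Real.Gamma (μ + 1 / 2) / (Real.Gamma μ * Real.Gamma (1 / 2))

/-- The one-dimensional generalized (Dunkl) translation with parameter `μ`:
`(τ_x^μ f)(t) = c_μ ∫_{−1}^{1} [f_e(B(θ)) + f_o(B(θ))(x+t)/B(θ)] (1+θ)(1−θ²)^{μ−1} dθ`,
where the odd term is interpreted as `0` when `B(θ) = 0`. -/
def tau1 (μ : ℝ) (f : ℝ → ℝ) (x t : ℝ) : ℝ :=
  cMu μ * ∫ θ in (-1 : ℝ)..1,
    (evenPart f (Bq x t θ) +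
        (if Bq x t θ = 0 then 0 else oddPart f (Bq x t θ) * (x + t) / Bq x t θ)) *
      ((1 + θ) * (1 - θ ^ 2) ^ (μ - 1))

open Set

section Parity

variable {f : ℝ → ℝ} {s r M : ℝ}

lemma evenPart_add_oddPart_mul_nonneg (h : 0 ≤ f s) (h_neg : 0 ≤ f (-s)) (hr : |r| ≤ 1) :
    0 ≤ evenPart f s + oddPart f s * r := by
  obtain ⟨hr_lower, hr_upper⟩ := abs_le.1 hr
  calc 0 ≤ ((1 + r) * f s + (1 - r) * f (-s)) / 2 := by
        have := mul_nonneg (by linarith : 0 ≤ 1 + r) h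
        have := mul_nonneg (by linarith : 0 ≤ 1 - r) h_neg
        linarith
    _ = evenPart f s + oddPart f s * r := by unfold evenPart oddPart; ring

lemma abs_evenPart_le (h : |f s| ≤ M) (h_neg : |f (-s)| ≤ M) : |evenPart f s| ≤ M := by
  rw [evenPart, abs_div, abs_two]
  linarith [abs_add_le (f s) (f (-s))]

lemma abs_oddPart_le (h : |f s| ≤ M) (h_neg : |f (-s)| ≤ M) : |oddPart f s| ≤ M := by
  rw [oddPart, abs_div, abs_two]
  linarith [abs_sub (f s) (f (-s))]

@[fun_prop]
lemma measurable_evenPart (hf : Measurable f) : Measurable (evenPart f) := by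
  unfold evenPart; fun_prop

@[fun_prop]
lemma measurable_oddPart (hf : Measurable f) : Measurable (oddPart f) := by
  unfold oddPart; fun_prop

end Parity

section Bq

variable {x t θ : ℝ}

lemma Bq_nonneg : 0 ≤ Bq x t θ := Real.sqrt_nonneg _

lemma Bq_neg_neg : Bq (-x) t (-θ) = Bq x t θ := by
  unfold Bq; congr 1; ring

@[fun_prop]
lemma continuous_Bq : Continuous (Bq x t) := by
  unfold Bq; fun_prop

lemma one_add_mul_one_sub_nonneg (hθ : θ ∈ Icc (-1) 1) : 0 ≤ (1 + θ) * (1 - θ) :=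
  mul_nonneg (by linarith [hθ.1]) (by linarith [hθ.2])

lemma Bq_le_abs_add_abs (hθ : θ ∈ Icc (-1) 1) : Bq x t θ ≤ |x| + |t| := by
  have h_cross : x * t * θ ≤ |x| * |t| :=
    calc x * t * θ ≤ |x * t * θ| := le_abs_self _
      _ = |x| * |t| * |θ| := by rw [abs_mul, abs_mul]
      _ ≤ |x| * |t| := mul_le_of_le_one_right (by positivity) (abs_le.2 hθ)
  refine Real.sqrt_le_iff.2 ⟨by positivity, ?_⟩
  rw [add_sq, sq_abs, sq_abs]
  linarith

lemma Bq_mem_Icc (hθ : θ ∈ Icc (-1) 1) : Bq x t θ ∈ Icc (-(|x| + |t|)) (|x| + |t|) :=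
  abs_le.1 ((abs_of_nonneg Bq_nonneg).trans_le (Bq_le_abs_add_abs hθ))

lemma neg_Bq_mem_Icc (hθ : θ ∈ Icc (-1) 1) : -Bq x t θ ∈ Icc (-(|x| + |t|)) (|x| + |t|) :=
  neg_mem_Icc_iff.2 (by simpa only [neg_neg] using Bq_mem_Icc hθ)

lemma abs_div_Bq_le {a c : ℝ} (h : |a| ≤ c * Bq x t θ) (hc : 0 ≤ c) : |a / Bq x t θ| ≤ c := by
  rw [abs_div, abs_of_nonneg Bq_nonneg]
  exact div_le_of_le_mul₀ Bq_nonneg hc h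

lemma abs_add_mul_div_Bq_le_one (hθ : θ ∈ Icc (-1) 1) : |(t + x * θ) / Bq x t θ| ≤ 1 := by
  refine abs_div_Bq_le ?_ zero_le_one
  rw [one_mul]
  refine Real.abs_le_sqrt ?_
  have h_defect : 0 ≤ x ^ 2 * ((1 + θ) * (1 - θ)) :=
    mul_nonneg (sq_nonneg x) (one_add_mul_one_sub_nonneg hθ)
  linarith

lemma abs_add_mul_one_add_div_Bq_le_two (hθ : θ ∈ Icc (-1) 1) :
    |(x + t) * (1 + θ) / Bq x t θ| ≤ 2 := by
  refine abs_div_Bq_le ?_ zero_le_two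
  have h_half : |(x + t) * (1 + θ) / 2| ≤ Bq x t θ := by
    refine Real.abs_le_sqrt ?_
    have h_sum : 0 ≤ (x + t) ^ 2 * ((1 + θ) * (1 - θ)) :=
      mul_nonneg (sq_nonneg _) (one_add_mul_one_sub_nonneg hθ)
    have h_diff : 0 ≤ (x - t) ^ 2 * (1 - θ) := mul_nonneg (sq_nonneg _) (by linarith [hθ.2])
    linarith
  rw [abs_div, abs_two] at h_half
  linarith

end Bq

lemma cMu_nonneg {μ : ℝ} (hμ : 0 < μ) : 0 ≤ cMu μ := by
  unfold cMu; positivity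

lemma intervalIntegrable_one_sub_sq_rpow {r : ℝ} (hr : -1 < r) :
    IntervalIntegrable (fun θ : ℝ => (1 - θ ^ 2) ^ r) volume (-1) 1 := by
  have h_right : IntervalIntegrable (fun θ : ℝ => (1 - θ ^ 2) ^ r) volume 0 1 := by
    have h_singular : IntervalIntegrable (fun θ : ℝ => (1 - θ) ^ r) volume 0 1 := by
      simpa using ((intervalIntegrable_rpow' hr).comp_sub_left (a := 0) (b := 1) 1).symm
    have h_regular : ContinuousOn (fun θ : ℝ => (1 + θ) ^ r) (uIcc 0 1) := by
      refine ContinuousOn.rpow_const (by fun_prop) fun θ hθ => Or.inl ?_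
      rw [uIcc_of_le zero_le_one] at hθ
      linarith [hθ.1]
    refine (h_singular.mul_continuousOn h_regular).congr fun θ hθ => ?_
    rw [uIoc_of_le zero_le_one] at hθ
    calc (1 - θ) ^ r * (1 + θ) ^ r = ((1 - θ) * (1 + θ)) ^ r :=
          (Real.mul_rpow (by linarith [hθ.2]) (by linarith [hθ.1])).symm
      _ = (1 - θ ^ 2) ^ r := by congr 1; ring
  have h_left : IntervalIntegrable (fun θ : ℝ => (1 - θ ^ 2) ^ r) volume (-1) 0 := by
    simpa using (h_right.comp_sub_left 0).symm
  exact h_left.trans h_right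

/-- The integrand of `tau1 μ f x t`, with the factor `1 + θ` distributed over the bracket so that
each summand is bounded. The convention that the odd term vanishes when `B(θ) = 0` is left to
`a / 0 = 0`. -/
def tau1Integrand (μ : ℝ) (f : ℝ → ℝ) (x t θ : ℝ) : ℝ :=
  (evenPart f (Bq x t θ) * (1 + θ) + oddPart f (Bq x t θ) * ((x + t) * (1 + θ) / Bq x t θ)) *
    (1 - θ ^ 2) ^ (μ - 1)

/-- Half the sum of the integrands of `tau1 μ f x t` at `θ` and of `tau1 μ f (-x) t` at `-θ`; it is
the integrand representing the symmetrized translation `(τ_x^μ + τ_{-x}^μ) / 2`. -/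
def tau1SymmIntegrand (μ : ℝ) (f : ℝ → ℝ) (x t θ : ℝ) : ℝ :=
  (evenPart f (Bq x t θ) + oddPart f (Bq x t θ) * ((t + x * θ) / Bq x t θ)) *
    (1 - θ ^ 2) ^ (μ - 1)

section Tau1

variable {μ : ℝ} {f : ℝ → ℝ} {x t : ℝ}

lemma tau1_eq_integral_tau1Integrand :
    tau1 μ f x t = cMu μ * ∫ θ in (-1 : ℝ)..1, tau1Integrand μ f x t θ := by
  unfold tau1 tau1Integrand
  congr! 3 with θ
  have h_ite : (if Bq x t θ = 0 then 0 else oddPart f (Bq x t θ) * (x + t) / Bq x t θ) =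
      oddPart f (Bq x t θ) * (x + t) / Bq x t θ := by
    split_ifs with h <;> simp [h]
  rw [h_ite]
  ring

lemma tau1Integrand_add_tau1Integrand_neg_neg (θ : ℝ) :
    tau1Integrand μ f x t θ + tau1Integrand μ f (-x) t (-θ) = 2 * tau1SymmIntegrand μ f x t θ := by
  unfold tau1Integrand tau1SymmIntegrand
  rw [Bq_neg_neg, neg_sq]
  ring

lemma tau1SymmIntegrand_nonneg (hf : ∀ s ∈ Icc (-(|x| + |t|)) (|x| + |t|), 0 ≤ f s) {θ : ℝ}
    (hθ : θ ∈ Icc (-1) 1) : 0 ≤ tau1SymmIntegrand μ f x t θ := by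
  refine mul_nonneg ?_ (Real.rpow_nonneg ?_ _)
  · exact evenPart_add_oddPart_mul_nonneg (hf _ (Bq_mem_Icc hθ)) (hf _ (neg_Bq_mem_Icc hθ))
      (abs_add_mul_div_Bq_le_one hθ)
  · linarith [one_add_mul_one_sub_nonneg hθ]

lemma intervalIntegrable_tau1Integrand {M : ℝ} (hμ : 0 < μ) (hf : Measurable f)
    (hfM : ∀ s ∈ Icc (-(|x| + |t|)) (|x| + |t|), |f s| ≤ M) :
    IntervalIntegrable (tau1Integrand μ f x t) volume (-1) 1 := by
  have h_weight := intervalIntegrable_one_sub_sq_rpow (r := μ - 1) (by linarith)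
  rw [intervalIntegrable_iff_integrableOn_Ioc_of_le (by norm_num)] at h_weight ⊢
  refine h_weight.bdd_mul (c := M * 2 + M * 2) (Measurable.aestronglyMeasurable (by fun_prop)) ?_
  refine ae_restrict_of_forall_mem measurableSet_Ioc fun θ hθ => ?_
  replace hθ := Ioc_subset_Icc_self hθ
  have h := hfM _ (Bq_mem_Icc hθ)
  have h_neg := hfM _ (neg_Bq_mem_Icc hθ)
  have h_factor : |1 + θ| ≤ 2 := abs_le.2 ⟨by linarith [hθ.1], by linarith [hθ.2]⟩
  refine (norm_add_le _ _).trans (add_le_add ?_ ?_)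
  · exact norm_mul_le_of_le (abs_evenPart_le h h_neg) h_factor
  · exact norm_mul_le_of_le (abs_oddPart_le h h_neg) (abs_add_mul_one_add_div_Bq_le_two hθ)

lemma tau1_add_tau1_neg {M : ℝ} (hμ : 0 < μ) (hf : Measurable f)
    (hfM : ∀ s ∈ Icc (-(|x| + |t|)) (|x| + |t|), |f s| ≤ M) :
    tau1 μ f x t + tau1 μ f (-x) t =
      2 * cMu μ * ∫ θ in (-1 : ℝ)..1, tau1SymmIntegrand μ f x t θ := by
  have h_int := intervalIntegrable_tau1Integrand hμ hf hfM
  have h_int_neg : IntervalIntegrable (fun θ => tau1Integrand μ f (-x) t (-θ)) volume (-1) 1 := by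
    have := intervalIntegrable_tau1Integrand (x := -x) (t := t) hμ hf (by rwa [abs_neg])
    simpa using (this.comp_sub_left 0).symm
  have h_reflect : ∫ θ in (-1 : ℝ)..1, tau1Integrand μ f (-x) t θ =
      ∫ θ in (-1 : ℝ)..1, tau1Integrand μ f (-x) t (-θ) := by
    rw [integral_comp_neg, neg_neg]
  calc tau1 μ f x t + tau1 μ f (-x) t
    _ = cMu μ * ∫ θ in (-1 : ℝ)..1, (tau1Integrand μ f x t θ + tau1Integrand μ f (-x) t (-θ)) := by
      rw [tau1_eq_integral_tau1Integrand, tau1_eq_integral_tau1Integrand, h_reflect, ← mul_add,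
        integral_add h_int h_int_neg]
    _ = 2 * cMu μ * ∫ θ in (-1 : ℝ)..1, tau1SymmIntegrand μ f x t θ := by
      simp only [tau1Integrand_add_tau1Integrand_neg_neg, intervalIntegral.integral_const_mul]
      ring

end Tau1

theorem tau1_add_neg_nonneg_general {μ : ℝ} (hμ : 0 < μ) {f : ℝ → ℝ} (hf : Measurable f)
    {x t M : ℝ} (hfM : ∀ s ∈ Icc (-(|x| + |t|)) (|x| + |t|), |f s| ≤ M)
    (hf0 : ∀ s ∈ Icc (-(|x| + |t|)) (|x| + |t|), 0 ≤ f s) :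
    0 ≤ tau1 μ f x t + tau1 μ f (-x) t := by
  rw [tau1_add_tau1_neg hμ hf hfM]
  exact mul_nonneg (mul_nonneg zero_le_two (cMu_nonneg hμ))
    (integral_nonneg (by norm_num) fun _ => tau1SymmIntegrand_nonneg hf0)

/-- **Positivity of `τ_x^{λ+1} + τ_{−x}^{λ+1}`.** For `λ > 0` and continuous `f ≥ 0`,
`(τ_x^{λ+1} f)(t) + (τ_{−x}^{λ+1} f)(t) ≥ 0`. -/
theorem tau1_add_neg_nonneg
    (lam : ℝ) (hlam : 0 < lam) (f : ℝ → ℝ) (hf : Continuous f) (hf0 : ∀ s, 0 ≤ f s)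
    (x t : ℝ) :
    0 ≤ tau1 (lam + 1) f x t + tau1 (lam + 1) f (-x) t := by
  obtain ⟨M, hfM⟩ := isCompact_Icc.exists_bound_of_continuousOn hf.continuousOn
  exact tau1_add_neg_nonneg_general (by linarith) hf.measurable hfM fun s _ => hf0 s

end
end

section
/- Let u be a continuous function on ℝ^{d+1}₊ and E a Lebesgue-measurable subset of ℝ^d with 0 < |E| < ∞. If u is non-tangentially bounded at (x,0) for every x ∈ E, then for any ε > 0 there exists a compact set E_ε ⊆ E with |E \ E_ε| < ε such that for every a > 0 and h > 0 there is a constant c > 0 with |u(x,y)| ≤ c for all (x,y) ∈ ∪_{x⁰∈E_ε} Γ_a^h(x⁰). -/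
/-!
Two uniformisations produce the compact set. The points over which `u` is bounded by `n` on the cone
of aperture and height `1 / (n + 1)` form closed sets increasing with `n`, so a compact `K` carrying
most of `E` lies inside one of them. At a density point `x` of `K`, balls centred at `t → x` of
radius `η * dist t x` eventually meet `K`; this is a closed condition on `x` at each scale, so
discarding a small part of `K` for each of countably many `η` leaves a closed `L` on which the scale
depends on `η` only.

A point of a wide cone over `K ∩ L` at small height `y` is then so close to `K` that it lies in a
narrow cone over some point of `K`, where `u` is bounded. The points of bounded height `y ≥ δ` lie
in a compact subset of the half-space, where continuity gives the bound. As `η` is arbitrary, every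
aperture is covered by the same compact set.
-/

open MeasureTheory Filter Metric
open scoped Topology

noncomputable section

section Measure

variable {X : Type*} [MeasurableSpace X] {μ : Measure X} {ε : ENNReal}

lemma exists_measure_compl_lt_of_monotone [IsFiniteMeasure μ] {S : ℕ → Set X}
    (hS : ∀ n, NullMeasurableSet (S n) μ) (hmono : Monotone S)
    (hcover : ∀ᵐ x ∂μ, ∃ n, x ∈ S n) (hε : ε ≠ 0) : ∃ n, μ (S n)ᶜ < ε := by
  have hnull : μ (⋂ n, (S n)ᶜ) = 0 := by
    rw [← Set.compl_iUnion]
    exact measure_mono_null (fun x hx hn => hx (Set.mem_iUnion.2 hn)) hcover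
  have hlim : Tendsto (fun n => μ (S n)ᶜ) atTop (𝓝 0) := hnull ▸
    tendsto_measure_iInter_atTop (fun n => (hS n).compl)
      (fun _ _ hmn => Set.compl_subset_compl.2 (hmono hmn)) ⟨0, measure_ne_top μ _⟩
  exact (hlim.eventually_lt_const hε.bot_lt).exists

lemma exists_measure_compl_iInter_lt_of_monotone [IsFiniteMeasure μ] {ι : Type*} [Countable ι]
    {S : ι → ℕ → Set X} (hS : ∀ i n, NullMeasurableSet (S i n) μ) (hmono : ∀ i, Monotone (S i))
    (hcover : ∀ i, ∀ᵐ x ∂μ, ∃ n, x ∈ S i n) (hε : ε ≠ 0) :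
    ∃ n : ι → ℕ, μ (⋂ i, S i (n i))ᶜ < ε := by
  obtain ⟨η, hη, hηε⟩ := ENNReal.exists_pos_sum_of_countable' hε ι
  choose n hn using fun i =>
    exists_measure_compl_lt_of_monotone (hS i) (hmono i) (hcover i) (hη i).ne'
  refine ⟨n, ?_⟩
  calc μ (⋂ i, S i (n i))ᶜ = μ (⋃ i, (S i (n i))ᶜ) := by rw [Set.compl_iInter]
    _ ≤ ∑' i, μ (S i (n i))ᶜ := measure_iUnion_le _
    _ ≤ ∑' i, η i := ENNReal.tsum_le_tsum fun i => (hn i).le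
    _ < ε := hηε

lemma measure_sdiff_lt_of_sdiff_lt_half {A B C : Set X} (hAB : μ (A \ B) < ε / 2)
    (hBC : μ (B \ C) < ε / 2) : μ (A \ C) < ε :=
  calc μ (A \ C) ≤ μ (A \ B ∪ B \ C) := measure_mono (sdiff_triangle A B C)
    _ ≤ μ (A \ B) + μ (B \ C) := measure_union_le _ _
    _ < ε / 2 + ε / 2 := ENNReal.add_lt_add hAB hBC
    _ = ε := ENNReal.add_halves ε

lemma exists_isCompact_subset_measure_sdiff_lt [TopologicalSpace X] [BorelSpace X]
    [R1Space X] [μ.InnerRegularCompactLTTop] {A : Set X} (hA : NullMeasurableSet A μ)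
    (hAfin : μ A ≠ ⊤) (hε : ε ≠ 0) : ∃ K ⊆ A, IsCompact K ∧ μ (A \ K) < ε := by
  obtain ⟨B, hBA, hB, hBAe⟩ := hA.exists_measurable_subset_ae_eq
  obtain ⟨K, hKB, hK, -, hBK⟩ :=
    hB.exists_isCompact_isClosed_sdiff_lt (measure_ne_top_of_subset hBA hAfin) hε
  refine ⟨K, hKB.trans hBA, hK, ?_⟩
  rwa [measure_congr (hBAe.symm.diff (ae_eq_refl K))]

end Measure

section Cone

variable {X F : Type*} [PseudoMetricSpace X] [SeminormedAddGroup F] {u : X × ℝ → F}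
  {K : Set X} {a h : ℝ} {x : X}

/-- The truncated cone of aperture `a` and height `h` with vertex `(x, 0)`, in the upper half-space
over an arbitrary pseudometric space. For `X = ℝ^d` it is `coneT a h x`. -/
def truncatedCone (a h : ℝ) (x : X) : Set (X × ℝ) :=
  {p | 0 < p.2 ∧ p.2 < h ∧ dist p.1 x < a * p.2}

/-- The sawtooth region over `K`: the union of the truncated cones with vertices in `K`. -/
def sawtooth (a h : ℝ) (K : Set X) : Set (X × ℝ) :=
  ⋃ x ∈ K, truncatedCone a h x

/-- `u` is non-tangentially bounded at `(x, 0)`: it is bounded on some truncated cone there.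
For real-valued `u` and `X = ℝ^d` it is `NTBounded u x`. -/
def NontangentiallyBoundedAt (u : X × ℝ → F) (x : X) : Prop :=
  ∃ a > 0, ∃ h > 0, ∃ M : ℝ, ∀ p ∈ truncatedCone a h x, ‖u p‖ ≤ M

lemma truncatedCone_mono {a' h' : ℝ} (ha : a ≤ a') (hh : h ≤ h') :
    truncatedCone a h x ⊆ truncatedCone a' h' x := by
  rintro p ⟨hpos, hlt, hdist⟩
  exact ⟨hpos, hlt.trans_le hh, hdist.trans_le (by gcongr)⟩

lemma mem_sawtooth {p : X × ℝ} : p ∈ sawtooth a h K ↔ ∃ x ∈ K, p ∈ truncatedCone a h x := by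
  simp only [sawtooth, Set.mem_iUnion, exists_prop]

lemma isClosed_setOf_truncatedCone_subset (a h : ℝ) (S : Set (X × ℝ)) :
    IsClosed {x | truncatedCone a h x ⊆ S} := by
  simp only [Set.subset_def, Set.ofPred_forall]
  refine isClosed_iInter fun p => isClosed_imp ?_ isClosed_const
  exact isOpen_const.and (isOpen_const.and (isOpen_lt (by fun_prop) continuous_const))

/-- The points `x` over which `u` is bounded by `n` on the cone of aperture and height
`1 / (n + 1)`. A single index controls aperture, height and bound, so that the sets increase and
exhaust the points of non-tangential boundedness. -/
def coneBoundedSet (u : X × ℝ → F) (n : ℕ) : Set X :=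
  {x | truncatedCone (1 / (n + 1 : ℝ)) (1 / (n + 1 : ℝ)) x ⊆ {p | ‖u p‖ ≤ n}}

lemma isClosed_coneBoundedSet (u : X × ℝ → F) (n : ℕ) : IsClosed (coneBoundedSet u n) :=
  isClosed_setOf_truncatedCone_subset _ _ _

lemma monotone_coneBoundedSet (u : X × ℝ → F) : Monotone (coneBoundedSet u) := by
  intro m n hmn x hx p hp
  have hsize : 1 / (n + 1 : ℝ) ≤ 1 / (m + 1) := by gcongr
  have hbound : ‖u p‖ ≤ m := hx (truncatedCone_mono hsize hsize hp)
  exact hbound.trans (Nat.cast_le.2 hmn)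

lemma NontangentiallyBoundedAt.exists_mem_coneBoundedSet (hu : NontangentiallyBoundedAt u x) :
    ∃ n, x ∈ coneBoundedSet u n := by
  obtain ⟨a, ha, h, hh, M, hM⟩ := hu
  have hsize := tendsto_one_div_add_atTop_nhds_zero_nat (𝕜 := ℝ)
  obtain ⟨n, hna, hnh, hMn⟩ := ((hsize.eventually_le_const ha).and
    ((hsize.eventually_le_const hh).and
      (tendsto_natCast_atTop_atTop.eventually_ge_atTop M))).exists
  exact ⟨n, fun p hp => (hM p (truncatedCone_mono hna hnh hp)).trans hMn⟩

lemma exists_isCompact_subset_bounded_on_sawtooth [MeasurableSpace X] [BorelSpace X]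
    {μ : Measure X} [μ.InnerRegularCompactLTTop] {E : Set X} (hE : NullMeasurableSet E μ)
    (hEfin : μ E ≠ ⊤) (hu : ∀ᵐ x ∂μ.restrict E, NontangentiallyBoundedAt u x)
    {ε : ENNReal} (hε : ε ≠ 0) :
    ∃ K ⊆ E, IsCompact K ∧ μ (E \ K) < ε ∧
      ∃ α > 0, ∃ M : ℝ, ∀ p ∈ sawtooth α α K, ‖u p‖ ≤ M := by
  have : IsFiniteMeasure (μ.restrict E) := isFiniteMeasure_restrict.2 hEfin
  have hmeas (n : ℕ) : MeasurableSet (coneBoundedSet u n) :=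
    (isClosed_coneBoundedSet u n).measurableSet
  obtain ⟨n, hn⟩ := exists_measure_compl_lt_of_monotone
    (fun n => (hmeas n).nullMeasurableSet) (monotone_coneBoundedSet u)
    (hu.mono fun x hx => hx.exists_mem_coneBoundedSet) (ENNReal.half_pos hε).ne'
  obtain ⟨K, hKsub, hK, hKmeas⟩ := exists_isCompact_subset_measure_sdiff_lt
    (hE.inter (hmeas n).nullMeasurableSet)
    (measure_ne_top_of_subset Set.inter_subset_left hEfin) (ENNReal.half_pos hε).ne'
  refine ⟨K, hKsub.trans Set.inter_subset_left, hK,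
    measure_sdiff_lt_of_sdiff_lt_half ?_ hKmeas, 1 / (n + 1 : ℝ), by positivity, n, fun p hp => ?_⟩
  · rwa [Measure.restrict_apply (hmeas n).compl, Set.inter_comm, ← Set.sdiff_eq,
      ← Set.sdiff_self_inter] at hn
  · obtain ⟨x, hxK, hpx⟩ := mem_sawtooth.1 hp
    exact (hKsub hxK).2 hpx

end Cone

section Porosity

variable {X : Type*} [PseudoMetricSpace X] {K L : Set X} {η r : ℝ}

/-- The points at which `K` has no hole of relative size `η` at scales below `r`: every `t` within
`r` of `x` is at distance at most `η * dist t x` from `K`. For `K = ∅` this is all of `X`, since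
`infDist t ∅ = 0`. -/
def nonporousSet (K : Set X) (η r : ℝ) : Set X :=
  {x | ∀ t, dist t x < r → infDist t K ≤ η * dist t x}

lemma isClosed_nonporousSet (K : Set X) (η r : ℝ) : IsClosed (nonporousSet K η r) := by
  simp only [nonporousSet, Set.ofPred_forall]
  exact isClosed_iInter fun t => isClosed_imp (isOpen_lt (by fun_prop) continuous_const)
    (isClosed_le continuous_const (by fun_prop))

lemma nonporousSet_mono {η' r' : ℝ} (hη : η ≤ η') (hr : r' ≤ r) :
    nonporousSet K η r ⊆ nonporousSet K η' r' := fun _ hx t ht =>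
  (hx t (ht.trans_le hr)).trans (by gcongr)

lemma sawtooth_subset_sawtooth_of_subset_nonporousSet {a α h δ : ℝ} (hLK : L ⊆ K)
    (hL : L ⊆ nonporousSet K η r) (hη : 0 ≤ η) (hηa : a * η < α) (hδ : a * δ ≤ r) :
    sawtooth a (min δ h) L ⊆ sawtooth α h K := by
  intro p hp
  obtain ⟨x, hxL, hpos, hlt, hdist⟩ := mem_sawtooth.1 hp
  have ha : 0 < a := pos_of_mul_pos_left (dist_nonneg.trans_lt hdist) hpos.le
  have hnear : dist p.1 x < r := calc
    dist p.1 x < a * p.2 := hdist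
    _ ≤ a * δ := by gcongr; exact (lt_min_iff.1 hlt).1.le
    _ ≤ r := hδ
  have hinf : infDist p.1 K < α * p.2 := calc
    infDist p.1 K ≤ η * dist p.1 x := hL hxL p.1 hnear
    _ ≤ η * (a * p.2) := by gcongr
    _ = a * η * p.2 := by ring
    _ < α * p.2 := by gcongr
  obtain ⟨z, hzK, hz⟩ := (infDist_lt_iff ⟨x, hLK hxL⟩).1 hinf
  exact mem_sawtooth.2 ⟨z, hzK, hpos, (lt_min_iff.1 hlt).2, hz⟩

variable [MeasurableSpace X] [BorelSpace X] [SecondCountableTopology X]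

/-- The Lebesgue density theorem is applied along balls centred at `t → x` rather than at `x`; their
radii `η * dist t x` are comparable to the distance from the centre to `x`. -/
lemma ae_exists_mem_nonporousSet (μ : Measure X) [IsUnifLocDoublingMeasure μ]
    [IsLocallyFiniteMeasure μ] (K : Set X) (hη : 0 < η) :
    ∀ᵐ x ∂μ.restrict K, ∃ r > 0, x ∈ nonporousSet K η r := by
  have hclosure : ∀ᵐ x ∂μ.restrict K, x ∈ closure K :=
    ae_restrict_of_ae_restrict_of_subset subset_closure
      (ae_restrict_mem isClosed_closure.measurableSet)
  filter_upwards [hclosure, IsUnifLocDoublingMeasure.ae_tendsto_measure_inter_div μ K η⁻¹]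
    with x hxK hdensity
  have hradius : Tendsto (fun t => η * dist t x) (𝓝[{t | 0 < dist t x}] x) (𝓝[>] 0) := by
    refine tendsto_nhdsWithin_iff.2 ⟨?_, ?_⟩
    · have hcont : Continuous fun t => η * dist t x := by fun_prop
      simpa using (hcont.tendsto x).mono_left nhdsWithin_le_nhds
    · filter_upwards [self_mem_nhdsWithin] with t ht using mul_pos hη ht
  have hmeets : ∀ᶠ t in 𝓝[{t | 0 < dist t x}] x, (K ∩ closedBall t (η * dist t x)).Nonempty := by
    have hratio := hdensity (fun t => t) _ hradius (Eventually.of_forall fun t => by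
      rw [mem_closedBall, inv_mul_cancel_left₀ hη.ne', dist_comm])
    filter_upwards [hratio.eventually_const_lt one_pos] with t ht
    exact nonempty_of_measure_ne_zero (ENNReal.div_pos_iff.1 ht).1
  obtain ⟨r, hr, hball⟩ := Metric.eventually_nhds_iff.1 (eventually_nhdsWithin_iff.1 hmeets)
  refine ⟨r, hr, fun t ht => ?_⟩
  rcases (dist_nonneg (x := t) (y := x)).eq_or_lt with hzero | hpos
  · have htx : Inseparable t x := Metric.inseparable_iff.2 hzero.symm
    have htK : t ∈ closure K := (htx.mem_closed_iff isClosed_closure).2 hxK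
    rw [← hzero, mul_zero, infDist_zero_of_mem_closure htK]
  · obtain ⟨z, hzK, hz⟩ := hball ht hpos
    exact (infDist_le_dist_of_mem hzK).trans (mem_closedBall'.1 hz)

lemma exists_isClosed_subset_nonporousSet {μ : Measure X} [IsUnifLocDoublingMeasure μ]
    [IsLocallyFiniteMeasure μ] (hK : μ K ≠ ⊤) {ε : ENNReal} (hε : ε ≠ 0) :
    ∃ L, IsClosed L ∧ μ (K \ L) < ε ∧ ∀ η > 0, ∃ r > 0, L ⊆ nonporousSet K η r := by
  have : IsFiniteMeasure (μ.restrict K) := isFiniteMeasure_restrict.2 hK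
  let S (j k : ℕ) : Set X := nonporousSet K (1 / (j + 1 : ℝ)) (1 / (k + 1 : ℝ))
  have hclosed (j k : ℕ) : IsClosed (S j k) := isClosed_nonporousSet _ _ _
  have hmono (j : ℕ) : Monotone (S j) := fun m n hmn =>
    nonporousSet_mono le_rfl (by gcongr)
  have hcover (j : ℕ) : ∀ᵐ x ∂μ.restrict K, ∃ k, x ∈ S j k := by
    filter_upwards [ae_exists_mem_nonporousSet μ K (η := 1 / (j + 1 : ℝ)) (by positivity)]
      with x ⟨r, hr, hx⟩
    obtain ⟨k, hk⟩ := exists_nat_one_div_lt hr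
    exact ⟨k, nonporousSet_mono le_rfl hk.le hx⟩
  obtain ⟨k, hk⟩ := exists_measure_compl_iInter_lt_of_monotone
    (fun j k => (hclosed j k).nullMeasurableSet) hmono hcover hε
  have hL : IsClosed (⋂ j, S j (k j)) := isClosed_iInter fun j => hclosed j (k j)
  refine ⟨⋂ j, S j (k j), hL, ?_, fun η hη => ?_⟩
  · rwa [Measure.restrict_apply hL.measurableSet.compl, Set.inter_comm, ← Set.sdiff_eq] at hk
  · obtain ⟨j, hj⟩ := exists_nat_one_div_lt hη
    exact ⟨1 / (k j + 1 : ℝ), by positivity,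
      (Set.iInter_subset _ j).trans (nonporousSet_mono hj.le le_rfl)⟩

end Porosity

section Sawtooth

variable {X F : Type*} [PseudoMetricSpace X] [ProperSpace X] [SeminormedAddGroup F]
  {u : X × ℝ → F} {K L : Set X}

lemma exists_norm_le_on_sawtooth_of_le (hu : ContinuousOn u {p | 0 < p.2}) (hL : IsCompact L)
    {δ : ℝ} (hδ : 0 < δ) (a h : ℝ) : ∃ C, ∀ p ∈ sawtooth a h L, δ ≤ p.2 → ‖u p‖ ≤ C := by
  have hcompact : IsCompact (cthickening (a * h) L ×ˢ Set.Icc δ h) :=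
    hL.cthickening.prod isCompact_Icc
  obtain ⟨C, hC⟩ := hcompact.exists_bound_of_continuousOn
    (hu.mono fun p hp => hδ.trans_le hp.2.1)
  refine ⟨C, fun p hp hδp => ?_⟩
  obtain ⟨x, hxL, hpos, hlt, hdist⟩ := mem_sawtooth.1 hp
  have ha : 0 < a := pos_of_mul_pos_left (dist_nonneg.trans_lt hdist) hpos.le
  have hdist' : dist p.1 x ≤ a * h := hdist.le.trans (by gcongr)
  exact hC p ⟨mem_cthickening_of_dist_le _ x _ _ hxL hdist', hδp, hlt.le⟩

lemma exists_norm_le_on_sawtooth_of_subset_nonporousSet (hu : ContinuousOn u {p | 0 < p.2})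
    (hL : IsCompact L) (hLK : L ⊆ K) (hnonporous : ∀ η > 0, ∃ r > 0, L ⊆ nonporousSet K η r)
    {α M : ℝ} (hα : 0 < α) (hM : ∀ p ∈ sawtooth α α K, ‖u p‖ ≤ M) (a h : ℝ) :
    ∃ C > 0, ∀ p ∈ sawtooth a h L, ‖u p‖ ≤ C := by
  obtain ⟨η, hη, hηa⟩ := exists_pos_mul_lt hα a
  obtain ⟨r, hr, hLr⟩ := hnonporous η hη
  obtain ⟨δ, hδ, hδr⟩ := exists_pos_mul_lt hr a
  obtain ⟨C, hC⟩ := exists_norm_le_on_sawtooth_of_le hu hL (lt_min hδ hα) a h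
  refine ⟨max 1 (max C M), by positivity, fun p hp => ?_⟩
  rcases lt_or_ge p.2 (min δ α) with hlow | hhigh
  · obtain ⟨x, hxL, hpos, -, hdist⟩ := mem_sawtooth.1 hp
    have hnarrow : p ∈ sawtooth α α K :=
      sawtooth_subset_sawtooth_of_subset_nonporousSet hLK hLr hη.le hηa hδr.le
        (mem_sawtooth.2 ⟨x, hxL, hpos, hlow, hdist⟩)
    exact (hM p hnarrow).trans ((le_max_right _ _).trans (le_max_right _ _))
  · exact (hC p hp hhigh).trans ((le_max_left _ _).trans (le_max_right _ _))

theorem uniform_bound_on_sawtooth_of_ntbounded_general [MeasurableSpace X] [BorelSpace X]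
    {μ : Measure X} [IsUnifLocDoublingMeasure μ] [IsLocallyFiniteMeasure μ]
    (hu : ContinuousOn u {p | 0 < p.2}) {E : Set X} (hE : NullMeasurableSet E μ)
    (hEfin : μ E ≠ ⊤) (hbdd : ∀ᵐ x ∂μ.restrict E, NontangentiallyBoundedAt u x)
    {ε : ENNReal} (hε : ε ≠ 0) :
    ∃ L ⊆ E, IsCompact L ∧ μ (E \ L) < ε ∧
      ∀ a h, ∃ C > 0, ∀ p ∈ sawtooth a h L, ‖u p‖ ≤ C := by
  have hε2 : ε / 2 ≠ 0 := (ENNReal.half_pos hε).ne'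
  obtain ⟨K, hKE, hK, hEK, α, hα, M, hM⟩ :=
    exists_isCompact_subset_bounded_on_sawtooth hE hEfin hbdd hε2
  obtain ⟨L, hL, hKL, hnonporous⟩ :=
    exists_isClosed_subset_nonporousSet (measure_ne_top_of_subset hKE hEfin) hε2
  refine ⟨K ∩ L, Set.inter_subset_left.trans hKE, hK.inter_right hL,
    measure_sdiff_lt_of_sdiff_lt_half hEK (by rwa [Set.sdiff_self_inter]), fun a h => ?_⟩
  exact exists_norm_le_on_sawtooth_of_subset_nonporousSet hu (hK.inter_right hL)
    Set.inter_subset_left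
    (fun η hη => (hnonporous η hη).imp fun r hr => ⟨hr.1, Set.inter_subset_right.trans hr.2⟩)
    hα hM a h

end Sawtooth

/-- **Lemma 4.4 of Stein's book (Lemma 4.5 in the paper).** If `u` is continuous on
`ℝ^{d+1}₊` and non-tangentially bounded at `(x,0)` for every `x` in a measurable set `E`
with `0 < |E| < ∞`, then for every `ε > 0` there is a compact `E_ε ⊆ E` with
`|E \ E_ε| < ε` on whose sawtooth regions `u` is uniformly bounded. -/
theorem uniform_bound_on_sawtooth_of_ntbounded
    {d : ℕ} (hd : 1 ≤ d) (u : Ed d × ℝ → ℝ) (hu : ContinuousOn u (upperHS d))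
    (E : Set (Ed d)) (hEm : MeasurableSet E)
    (hE0 : 0 < volume E) (hEfin : volume E < ⊤)
    (hbdd : ∀ x ∈ E, NTBounded u x) :
    ∀ ε > (0 : ℝ), ∃ Eε : Set (Ed d),
      IsCompact Eε ∧ Eε ⊆ E ∧ volume (E \ Eε) < ENNReal.ofReal ε ∧
      ∀ a > (0 : ℝ), ∀ h > (0 : ℝ), ∃ c > (0 : ℝ),
        ∀ x0 ∈ Eε, ∀ p ∈ coneT a h x0, |u p| ≤ c := by
  intro ε hε
  obtain ⟨L, hLE, hL, hmeas, hbound⟩ := uniform_bound_on_sawtooth_of_ntbounded_general hu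
    hEm.nullMeasurableSet hEfin.ne (ae_restrict_of_forall_mem hEm hbdd)
    (ENNReal.ofReal_pos.2 hε).ne'
  exact ⟨L, hL, hLE, hmeas, fun a _ h _ => (hbound a h).imp fun c hc =>
    ⟨hc.1, fun x hx p hp => hc.2 p (mem_sawtooth.2 ⟨x, hx, hp⟩)⟩⟩

end
end
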